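/- Let d ≥ 4 and let X be a finite set in Euclidean d-space with all pairwise distances at most 1. Then there do not exist two d-element subsets K₁, K₂ of X, each having all pairwise distances within it equal to 1, such that the intersection K₁ ∩ K₂ has exactly d − 3 elements. -/

import Mathlib

theorem third (k j : Fin 3) (h : k ≠ j) :
    ∃ m, m ≠ k ∧ m ≠ j ∧ ∀ l, l ≠ m → l = k ∨ l = j := by
  have h3 : ((k : ℕ) + j ≤ 3) := by omega
  refine ⟨⟨3 - k - j, by omega⟩, ?_, ?_, ?_⟩
  · intro e; have := congrArg Fin.val e; simp only at this; omega
  · intro e; have := congrArg Fin.val e; simp only at this; omega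
  · intro l hl
    have : (l : ℕ) ≠ 3 - k - j := fun e => hl (Fin.ext e)
    omega

theorem sign_tri (x : Fin 3 → ℝ) (h1 : ∃ i, 0 < x i) (h2 : ∃ i, x i < 0) :
    (∃ i, 0 < x i ∧ ∀ k, k ≠ i → x k ≤ 0) ∨ (∃ i, x i < 0 ∧ ∀ k, k ≠ i → 0 ≤ x k) := by
  simp only [Fin.exists_fin_succ, Fin.forall_fin_succ] at *
  simp at *
  rcases le_total (x 0) 0 with a | a <;> rcases le_total (x 1) 0 with b | b <;>
    rcases le_total (x 2) 0 with c | c <;> grind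

theorem core_A (N : Fin 3 → Fin 3 → ℝ) (h0 : ∀ i j, 0 ≤ N i j) (h1 : ∀ i j, N i j < 1)
    (x y : Fin 3 → ℝ) (hx : ∀ i, x i = ∑ j, N i j * y j) (hy : ∀ j, y j = ∑ i, N i j * x i)
    (i j : Fin 3) (xi : 0 < x i) (xk : ∀ k, k ≠ i → x k ≤ 0)
    (yj : 0 < y j) (yk : ∀ k, k ≠ j → y k ≤ 0) : False := by
  have e1 := hx i
  rw [← Finset.add_sum_erase _ _ (Finset.mem_univ j)] at e1
  have e2 := hy j
  rw [← Finset.add_sum_erase _ _ (Finset.mem_univ i)] at e2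
  have s1 : ∑ k ∈ Finset.univ.erase j, N i k * y k ≤ 0 :=
    Finset.sum_nonpos fun k hk => mul_nonpos_of_nonneg_of_nonpos (h0 i k) (yk k (Finset.ne_of_mem_erase hk))
  have s2 : ∑ k ∈ Finset.univ.erase i, N k j * x k ≤ 0 :=
    Finset.sum_nonpos fun k hk => mul_nonpos_of_nonneg_of_nonpos (h0 k j) (xk k (Finset.ne_of_mem_erase hk))
  have := h1 i j
  nlinarith

theorem core_B (N : Fin 3 → Fin 3 → ℝ) (h0 : ∀ i j, 0 ≤ N i j) (h1 : ∀ i j, N i j < 1)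
    (x y : Fin 3 → ℝ) (hx : ∀ i, x i = ∑ j, N i j * y j) (hy : ∀ j, y j = ∑ i, N i j * x i)
    (hs : ∑ i, x i = ∑ i, y i)
    (i j : Fin 3) (xi : 0 < x i) (xk : ∀ k, k ≠ i → x k ≤ 0)
    (yj : y j < 0) (yk : ∀ k, k ≠ j → 0 ≤ y k) : False := by
  have e1 := hx i
  rw [← Finset.add_sum_erase _ _ (Finset.mem_univ j)] at e1
  have e2 := hy j
  rw [← Finset.add_sum_erase _ _ (Finset.mem_univ i)] at e2
  rw [← Finset.add_sum_erase _ _ (Finset.mem_univ i),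
    ← Finset.add_sum_erase _ y (Finset.mem_univ j)] at hs
  have s2 : ∑ k ∈ Finset.univ.erase i, x k ≤ ∑ k ∈ Finset.univ.erase i, N k j * x k :=
    Finset.sum_le_sum fun k hk => by
      have := xk k (Finset.ne_of_mem_erase hk); have := h1 k j; nlinarith
  have t1 : N i j * y j ≤ 0 := mul_nonpos_of_nonneg_of_nonpos (h0 i j) yj.le
  have t2 : 0 ≤ N i j * x i := mul_nonneg (h0 i j) xi.le
  have s1 : ∑ k ∈ Finset.univ.erase j, N i k * y k < ∑ k ∈ Finset.univ.erase j, y k := by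
    apply Finset.sum_lt_sum
    · intro k hk
      have := yk k (Finset.ne_of_mem_erase hk); have := h1 i k; nlinarith
    · by_contra hc
      push Not at hc
      have : ∑ k ∈ Finset.univ.erase j, N i k * y k ≤ 0 := by
        refine Finset.sum_nonpos fun k hk => ?_
        have := yk k (Finset.ne_of_mem_erase hk)
        have := h1 i k
        have := hc k hk
        have : y k = 0 := by nlinarith
        simp [this]
      linarith
  linarith

theorem mixed (N : Fin 3 → Fin 3 → ℝ) (h0 : ∀ i j, 0 ≤ N i j) (h1 : ∀ i j, N i j < 1)
    (x y : Fin 3 → ℝ) (hx : ∀ i, x i = ∑ j, N i j * y j) (hy : ∀ j, y j = ∑ i, N i j * x i)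
    (hs : ∑ i, x i = ∑ i, y i)
    (p : ∃ i, 0 < x i) (n : ∃ i, x i < 0) : False := by
  have p' : ∃ i, 0 < y i := by
    by_contra hc
    push Not at hc
    obtain ⟨i, hi⟩ := p
    have := hx i
    have : ∑ j, N i j * y j ≤ 0 :=
      Finset.sum_nonpos fun k hk => mul_nonpos_of_nonneg_of_nonpos (h0 i k) (hc k)
    linarith
  have n' : ∃ i, y i < 0 := by
    by_contra hc
    push Not at hc
    obtain ⟨i, hi⟩ := n
    have := hx i
    have : 0 ≤ ∑ j, N i j * y j :=
      Finset.sum_nonneg fun k hk => mul_nonneg (h0 i k) (hc k)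
    linarith
  have hx' : ∀ i, (-x) i = ∑ j, N i j * (-y) j := by
    intro i; simp [hx i]
  have hy' : ∀ j, (-y) j = ∑ i, N i j * (-x) i := by
    intro i; simp [hy i]
  have hs' : ∑ i, (-x) i = ∑ i, (-y) i := by simp [hs]
  rcases sign_tri x p n with ⟨i, hi, hk⟩ | ⟨i, hi, hk⟩ <;>
  rcases sign_tri y p' n' with ⟨j, hj, hl⟩ | ⟨j, hj, hl⟩
  · exact core_A N h0 h1 x y hx hy i j hi hk hj hl
  · exact core_B N h0 h1 x y hx hy hs i j hi hk hj hl
  · exact core_B N h0 h1 (-x) (-y) hx' hy' hs' i j (by simpa using hi) (by simpa using hk) (by simpa using hj) (by simpa using hl)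
  · exact core_A N h0 h1 (-x) (-y) hx' hy' i j (by simpa using hi) (by simpa using hk) (by simpa using hj) (by simpa using hl)

theorem pos_psd (N : Fin 3 → Fin 3 → ℝ) (h0 : ∀ i j, 0 ≤ N i j)
    (x y : Fin 3 → ℝ) (xp : ∀ i, 0 < x i) (yp : ∀ i, 0 < y i)
    (hx : ∀ i, ∑ j, N i j * y j ≤ x i) (hy : ∀ j, ∑ i, N i j * x i ≤ y j)
    (p q : Fin 3 → ℝ) :
    2 * ∑ i, ∑ j, N i j * (p i * q j) ≤ ∑ i, p i ^ 2 + ∑ j, q j ^ 2 := by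
  have a1 : ∀ i, ∑ j, N i j * y j * (p i ^ 2 / x i) ≤ p i ^ 2 := by
    intro i
    rw [← Finset.sum_mul]
    calc _ ≤ x i * (p i ^ 2 / x i) := by
          apply mul_le_mul_of_nonneg_right (hx i)
          have := xp i
          positivity
      _ = _ := by have := (xp i).ne'; field_simp
  have a2 : ∀ j, ∑ i, N i j * x i * (q j ^ 2 / y j) ≤ q j ^ 2 := by
    intro j
    rw [← Finset.sum_mul]
    calc _ ≤ y j * (q j ^ 2 / y j) := by
          apply mul_le_mul_of_nonneg_right (hy j)
          have := yp j
          positivity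
      _ = _ := by have := (yp j).ne'; field_simp
  have b1 := Finset.sum_le_sum fun i (_ : i ∈ Finset.univ) => a1 i
  have b2 := Finset.sum_le_sum fun i (_ : i ∈ Finset.univ) => a2 i
  rw [Finset.sum_comm] at b2
  refine le_trans ?_ (add_le_add b1 b2)
  rw [Finset.mul_sum, ← Finset.sum_add_distrib]
  refine Finset.sum_le_sum fun i _ => ?_
  rw [Finset.mul_sum, ← Finset.sum_add_distrib]
  refine Finset.sum_le_sum fun j _ => ?_
  have hxi := xp i
  have hyj := yp j
  have : N i j * y j * (p i ^ 2 / x i) + N i j * x i * (q j ^ 2 / y j) - 2 * (N i j * (p i * q j))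
      = N i j * (y j * p i - x i * q j) ^ 2 / (x i * y j) := by
    field_simp
    ring
  have : 0 ≤ N i j * (y j * p i - x i * q j) ^ 2 / (x i * y j) := by
    have := h0 i j
    positivity
  linarith

/-- At most one zero coordinate. -/
theorem supp_two (N : Fin 3 → Fin 3 → ℝ) (h1 : ∀ i j, N i j < 1)
    (x y : Fin 3 → ℝ) (xp : ∀ i, 0 ≤ x i)
    (hy : ∀ j, y j = ∑ i, N i j * x i)
    (hs : ∑ i, x i = ∑ i, y i) (hne : ∃ i, 0 < x i) (j : Fin 3) (hj : ∀ k, k ≠ j → y k = 0) : False := by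
  have : ∑ i, y i = y j := Finset.sum_eq_single j (fun k _ hk => hj k hk) (by simp)
  have h2 : ∑ i, N i j * x i < ∑ i, x i := by
    obtain ⟨i, hi⟩ := hne
    apply Finset.sum_lt_sum
    · intro k hk
      have := xp k; have := h1 k j; nlinarith
    · refine ⟨i, Finset.mem_univ _, ?_⟩
      have := h1 i j; nlinarith
  have := hy j
  linarith

theorem zero_ineq (N : Fin 3 → Fin 3 → ℝ) (h0 : ∀ i j, 0 ≤ N i j) (h1 : ∀ i j, N i j < 1)
    (x y : Fin 3 → ℝ) (xp : ∀ i, 0 ≤ x i) (yp : ∀ i, 0 ≤ y i)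
    (hx : ∀ i, x i = ∑ j, N i j * y j) (hy : ∀ j, y j = ∑ i, N i j * x i)
    (hs : ∑ i, x i = ∑ i, y i) (hne : ∃ i, 0 < x i) (i : Fin 3) :
    ∑ j, N i j * (if y j = 0 then 1 else y j) ≤ (if x i = 0 then 1 else x i) := by
  have hz : ∀ j, y j = 0 → 0 < x i → N i j = 0 := by
    intro j hj hi
    have h := hy j
    rw [hj] at h
    have h := (Finset.sum_eq_zero_iff_of_nonneg (fun k _ => mul_nonneg (h0 k j) (xp k))).1 h.symm i
      (Finset.mem_univ _)
    rcases mul_eq_zero.1 h with h | h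
    · exact h
    · linarith
  have hz' : ∀ j, 0 < y j → x i = 0 → N i j = 0 := by
    intro j hj hi
    have h := hx i
    rw [hi] at h
    have h := (Finset.sum_eq_zero_iff_of_nonneg (fun k _ => mul_nonneg (h0 i k) (yp k))).1 h.symm j
      (Finset.mem_univ _)
    rcases mul_eq_zero.1 h with h | h
    · exact h
    · linarith
  by_cases hi : x i = 0
  · rw [if_pos hi]
    by_cases hex : ∃ j, y j = 0
    · obtain ⟨j, hj⟩ := hex
      have hu : ∀ k, k ≠ j → 0 < y k := by
        intro k hk
        by_contra hc
        have hk0 : y k = 0 := le_antisymm (not_lt.1 hc) (yp k)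
        have : ∃ m, m ≠ k ∧ m ≠ j ∧ ∀ l, l ≠ m → l = k ∨ l = j := by
          exact third k j hk
        obtain ⟨m, hm1, hm2, hm⟩ := this
        refine supp_two N h1 x y xp hy hs hne m ?_
        intro l hl
        rcases hm l hl with rfl | rfl <;> assumption
      rw [Finset.sum_eq_single j]
      · rw [if_pos hj]; linarith [h1 i j]
      · intro k _ hk
        rw [hz' k (hu k hk) hi, zero_mul]
      · simp
    · push Not at hex
      rw [Finset.sum_eq_zero]
      · norm_num
      · intro k _
        rw [hz' k (lt_of_le_of_ne (yp k) (hex k).symm) hi, zero_mul]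
  · rw [if_neg hi]
    conv_rhs => rw [hx i]
    refine Finset.sum_le_sum fun j _ => ?_
    by_cases hj : y j = 0
    · rw [hz j hj (lt_of_le_of_ne (xp i) (Ne.symm hi))]; simp
    · rw [if_neg hj]

theorem nonneg_psd (N : Fin 3 → Fin 3 → ℝ) (h0 : ∀ i j, 0 ≤ N i j) (h1 : ∀ i j, N i j < 1)
    (x y : Fin 3 → ℝ) (xp : ∀ i, 0 ≤ x i) (yp : ∀ i, 0 ≤ y i)
    (hx : ∀ i, x i = ∑ j, N i j * y j) (hy : ∀ j, y j = ∑ i, N i j * x i)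
    (hs : ∑ i, x i = ∑ i, y i) (hne : ∃ i, 0 < x i) (p q : Fin 3 → ℝ) :
    2 * ∑ i, ∑ j, N i j * (p i * q j) ≤ ∑ i, p i ^ 2 + ∑ j, q j ^ 2 := by
  have hne' : ∃ i, 0 < y i := by
    by_contra hc
    push Not at hc
    obtain ⟨i, hi⟩ := hne
    have := hx i
    have : ∑ j, N i j * y j ≤ 0 :=
      Finset.sum_nonpos fun k hk => mul_nonpos_of_nonneg_of_nonpos (h0 i k) (hc k)
    linarith
  refine pos_psd N h0 (fun i => if x i = 0 then 1 else x i) (fun i => if y i = 0 then 1 else y i)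
    ?_ ?_ ?_ ?_ p q
  · intro i
    split_ifs with h
    · norm_num
    · exact lt_of_le_of_ne (xp i) (Ne.symm h)
  · intro i
    split_ifs with h
    · norm_num
    · exact lt_of_le_of_ne (yp i) (Ne.symm h)
  · exact zero_ineq N h0 h1 x y xp yp hx hy hs hne
  · exact zero_ineq (fun i j => N j i) (fun i j => h0 j i) (fun i j => h1 j i) y x yp xp hy hx
      hs.symm hne'

/-- Abstract final contradiction: `(p, q, 0)` and, for the second system, any `(p', q', c)`. -/
theorem abstract_contra (N : Fin 3 → Fin 3 → ℝ) (h0 : ∀ i j, 0 ≤ N i j) (h1 : ∀ i j, N i j < 1)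
    (k : ℝ) (hk : 0 < k) (p q p' q' : Fin 3 → ℝ) (c : ℝ)
    (hp : ∀ i, p i + ∑ j, N i j * q j = 0) (hq : ∀ j, q j + ∑ i, N i j * p i = 0)
    (hs : ∑ i, p i + ∑ i, q i = 0) (hne : ∃ i, p i ≠ 0 ∨ q i ≠ 0)
    (hp' : ∀ i, p' i + ∑ j, N i j * q' j = -c) (hq' : ∀ j, q' j + ∑ i, N i j * p' i = -c)
    (hs' : ∑ i, p' i + ∑ i, q' i = k * c) (hne' : ∃ i, p' i ≠ 0 ∨ q' i ≠ 0)
    (hp0 : ∑ i, p' i = 0) : False := by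
  have hx : ∀ i, p i = ∑ j, N i j * (-q) j := by
    intro i; have := hp i; simp; linarith
  have hy : ∀ j, (-q) j = ∑ i, N i j * p i := by
    intro i; have := hq i; simp; linarith
  have hss : ∑ i, p i = ∑ i, (-q) i := by simp; linarith
  have hpn : ∃ i, p i ≠ 0 := by
    by_contra hc
    push Not at hc
    obtain ⟨i, h | h⟩ := hne
    · exact h (hc i)
    · have := hq i
      simp [hc] at this
      exact h this
  -- quadratic form bound
  have psd : ∀ a b : Fin 3 → ℝ,
      2 * ∑ i, ∑ j, N i j * (a i * b j) ≤ ∑ i, a i ^ 2 + ∑ j, b j ^ 2 := by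
    obtain ⟨i, hi⟩ := hpn
    by_cases hn : ∃ i, p i < 0
    · by_cases hpos : ∃ i, 0 < p i
      · exact (mixed N h0 h1 p (-q) hx hy hss hpos hn).elim
      · push Not at hpos
        have xp : ∀ i, 0 ≤ (-p) i := fun i => by simpa using hpos i
        have hy' : ∀ j, q j = ∑ i, N i j * (-p) i := by
          intro j; have := hy j; simp at this; simp; linarith
        have yp : ∀ i, 0 ≤ q i := fun j => by
          rw [hy' j]; exact Finset.sum_nonneg fun k _ => mul_nonneg (h0 k j) (xp k)
        refine nonneg_psd N h0 h1 (-p) q xp yp (fun i => ?_) hy' ?_ ?_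
        · have := hp i; simp; linarith
        · simp; linarith
        · obtain ⟨i, h⟩ := hn; exact ⟨i, by simpa using h⟩
    · push Not at hn
      have yp : ∀ i, 0 ≤ (-q) i := fun j => by
        rw [hy j]; exact Finset.sum_nonneg fun k _ => mul_nonneg (h0 k j) (hn k)
      exact nonneg_psd N h0 h1 p (-q) hn yp hx hy hss ⟨i, lt_of_le_of_ne (hn i) (Ne.symm hi)⟩
  have key := psd p' (-q')
  have e1 : ∑ i, p' i * (p' i + ∑ j, N i j * q' j) = -c * ∑ i, p' i := by
    rw [Finset.mul_sum]; refine Finset.sum_congr rfl fun i _ => ?_; rw [hp' i]; ring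
  have e2 : ∑ j, q' j * (q' j + ∑ i, N i j * p' i) = -c * ∑ i, q' i := by
    rw [Finset.mul_sum]; refine Finset.sum_congr rfl fun i _ => ?_; rw [hq' i]; ring
  have hc : c = 0 := by
    have : k * c ^ 2 ≤ 0 := by
      have e3 : -c * ∑ i, p' i + -c * ∑ i, q' i = - (k * c ^ 2) := by
        rw [← mul_add, hs']; ring
      simp only [Fin.sum_univ_three, Pi.neg_apply] at *
      nlinarith
    have : c ^ 2 ≤ 0 := by
      by_contra h
      push Not at h
      nlinarith [mul_pos hk h]
    nlinarith
  subst hc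
  have hpn' : ∃ i, p' i ≠ 0 := by
    by_contra hc
    push Not at hc
    obtain ⟨i, h | h⟩ := hne'
    · exact h (hc i)
    · have := hq' i
      simp [hc] at this
      exact h this
  obtain ⟨i, hi⟩ := hpn'
  refine mixed N h0 h1 p' (-q') (fun i => ?_) (fun j => ?_) ?_ ?_ ?_
  · have := hp' i; simp at *; linarith
  · have := hq' j; simp at *; linarith
  · simp at *; linarith
  · by_contra hc
    push Not at hc
    exact hi ((Finset.sum_eq_zero_iff_of_nonpos (fun i _ => hc i)).1 hp0 i (Finset.mem_univ _))
  · by_contra hc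
    push Not at hc
    exact hi ((Finset.sum_eq_zero_iff_of_nonneg (fun i _ => hc i)).1 hp0 i (Finset.mem_univ _))

theorem exists_rel {d : ℕ} (U : Finset (EuclideanSpace ℝ (Fin d))) (hU : d + 2 < U.card)
    (φ : EuclideanSpace ℝ (Fin d) → ℝ) :
    ∃ z : EuclideanSpace ℝ (Fin d) → ℝ, ∑ u ∈ U, z u • u = 0 ∧ ∑ u ∈ U, z u = 0 ∧
      ∑ u ∈ U, z u * φ u = 0 ∧ ∃ u ∈ U, z u ≠ 0 := by
  classical
  let g : EuclideanSpace ℝ (Fin d) → EuclideanSpace ℝ (Fin d) × ℝ × ℝ := fun u => (u, 1, φ u)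
  have hg : Function.Injective g := fun u v h => congrArg Prod.fst h
  have hc : Module.finrank ℝ (EuclideanSpace ℝ (Fin d) × ℝ × ℝ) < (U.image g).card := by
    rw [Finset.card_image_of_injective _ hg]
    simp
    omega
  obtain ⟨f, hf, x, hx, hfx⟩ := Module.exists_nontrivial_relation_of_finrank_lt_card hc
  rw [Finset.sum_image (fun _ _ _ _ h => hg h)] at hf
  obtain ⟨u, hu, rfl⟩ := Finset.mem_image.1 hx
  have h1 := congrArg Prod.fst hf
  have h2 := congrArg (fun w => w.2.1) hf
  have h3 := congrArg (fun w => w.2.2) hf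
  simp only [Prod.fst_sum, Prod.snd_sum, g, Prod.smul_fst, Prod.smul_snd, Prod.fst_zero,
    Prod.snd_zero, smul_eq_mul, mul_one] at h1 h2 h3
  exact ⟨fun u => f (g u), h1, h2, h3, u, hu, hfx⟩

theorem rel_dist {d : ℕ} (U : Finset (EuclideanSpace ℝ (Fin d)))
    (z : EuclideanSpace ℝ (Fin d) → ℝ) (h1 : ∑ u ∈ U, z u • u = 0) (h2 : ∑ u ∈ U, z u = 0)
    (v : EuclideanSpace ℝ (Fin d)) :
    ∑ u ∈ U, z u * (1 - ‖v - u‖ ^ 2) = - ∑ u ∈ U, z u * ‖u‖ ^ 2 := by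
  have h3 : inner ℝ v (∑ u ∈ U, z u • u) = 0 := by rw [h1, inner_zero_right]
  rw [inner_sum] at h3
  simp only [inner_smul_right] at h3
  have : ∑ u ∈ U, z u * (1 - ‖v - u‖ ^ 2) = (1 - ‖v‖ ^ 2) * ∑ u ∈ U, z u
      + 2 * ∑ u ∈ U, z u * inner ℝ v u - ∑ u ∈ U, z u * ‖u‖ ^ 2 := by
    rw [Finset.mul_sum, Finset.mul_sum, ← Finset.sum_add_distrib, ← Finset.sum_sub_distrib]
    refine Finset.sum_congr rfl fun u _ => ?_
    rw [norm_sub_sq_real]; ring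
  rw [this, h2, h3]; ring

theorem enum3 {α : Type*} (S : Finset α) (h : S.card = 3) :
    ∃ a : Fin 3 → α, Function.Injective a ∧ (∀ i, a i ∈ S) ∧ (∀ s ∈ S, ∃ i, a i = s) ∧
      ∀ f : α → ℝ, ∑ s ∈ S, f s = ∑ i, f (a i) := by
  let e := (S.equivFinOfCardEq h).symm
  refine ⟨fun i => (e i : α), ?_, fun i => (e i).2, ?_, ?_⟩
  · intro i j hij; exact e.injective (Subtype.ext hij)
  · intro s hs; exact ⟨e.symm ⟨s, hs⟩, by simp⟩
  · intro f
    rw [← Finset.sum_coe_sort S f]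
    exact (Equiv.sum_comp e (fun s : S => f s)).symm

/-- The system satisfied by an affine relation. -/
theorem system {d : ℕ} (A B C : Finset (EuclideanSpace ℝ (Fin d)))
    (a b : Fin 3 → EuclideanSpace ℝ (Fin d))
    (ha : ∀ f : EuclideanSpace ℝ (Fin d) → ℝ, ∑ s ∈ B, f s = ∑ i, f (a i))
    (hb : ∀ f : EuclideanSpace ℝ (Fin d) → ℝ, ∑ s ∈ C, f s = ∑ i, f (b i))
    (hasu : ∀ s ∈ B, ∃ i, a i = s) (hbsu : ∀ s ∈ C, ∃ i, b i = s)
    (U : Finset (EuclideanSpace ℝ (Fin d))) (hmem : ∀ u ∈ U, u ∈ A ∨ u ∈ B ∨ u ∈ C)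
    (hU : ∀ f : EuclideanSpace ℝ (Fin d) → ℝ,
      ∑ u ∈ U, f u = ∑ u ∈ A, f u + ∑ u ∈ B, f u + ∑ u ∈ C, f u)
    (hAA : ∀ u ∈ A, ∀ v ∈ A, u ≠ v → ‖u - v‖ = 1)
    (hAa : ∀ u ∈ A, ∀ i, ‖u - a i‖ = 1) (hAb : ∀ u ∈ A, ∀ i, ‖u - b i‖ = 1)
    (haa : ∀ i j, i ≠ j → ‖a i - a j‖ = 1) (hbb : ∀ i j, i ≠ j → ‖b i - b j‖ = 1)
    (z : EuclideanSpace ℝ (Fin d) → ℝ) (h1 : ∑ u ∈ U, z u • u = 0) (h2 : ∑ u ∈ U, z u = 0)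
    (hz : ∃ u ∈ U, z u ≠ 0) (c : ℝ) (hc : c = ∑ u ∈ U, z u * ‖u‖ ^ 2) :
    (∀ i, z (a i) + ∑ j, (1 - ‖a i - b j‖ ^ 2) * z (b j) = -c) ∧
    (∀ j, z (b j) + ∑ i, (1 - ‖a i - b j‖ ^ 2) * z (a i) = -c) ∧
    (∑ i, z (a i) + ∑ i, z (b i) = A.card * c) ∧ (∃ i, z (a i) ≠ 0 ∨ z (b i) ≠ 0) := by
  have key := rel_dist U z h1 h2
  rw [← hc] at key
  simp only [hU, ha, hb] at key h2
  have sa : ∀ i, ∑ j, z (a j) * (1 - ‖a i - a j‖ ^ 2) = z (a i) := by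
    intro i
    rw [Finset.sum_eq_single i]
    · simp
    · intro j _ hj; rw [haa i j hj.symm]; norm_num
    · simp
  have sb : ∀ i, ∑ j, z (b j) * (1 - ‖b i - b j‖ ^ 2) = z (b i) := by
    intro i
    rw [Finset.sum_eq_single i]
    · simp
    · intro j _ hj; rw [hbb i j hj.symm]; norm_num
    · simp
  have sA : ∀ v ∈ A, z v = -c := by
    intro v hv
    have h := key v
    rw [Finset.sum_eq_single v, Finset.sum_eq_zero, Finset.sum_eq_zero] at h
    · simpa using h
    · intro i _; rw [hAb v hv]; norm_num
    · intro i _; rw [hAa v hv]; norm_num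
    · intro u hu huv; rw [hAA v hv u hu huv.symm]; norm_num
    · intro h; exact absurd hv h
  have p1 : ∀ i, z (a i) + ∑ j, (1 - ‖a i - b j‖ ^ 2) * z (b j) = -c := by
    intro i
    have h := key (a i)
    rw [sa, Finset.sum_eq_zero, zero_add] at h
    · rw [← h]; simp only [mul_comm]
    · intro u hu; rw [norm_sub_rev, hAa u hu]; norm_num
  have p2 : ∀ j, z (b j) + ∑ i, (1 - ‖a i - b j‖ ^ 2) * z (a i) = -c := by
    intro i
    have h := key (b i)
    rw [sb, Finset.sum_eq_zero, zero_add] at h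
    · rw [← h, add_comm]; simp only [mul_comm, norm_sub_rev (b i)]
    · intro u hu; rw [norm_sub_rev, hAb u hu]; norm_num
  refine ⟨p1, p2, ?_, ?_⟩
  · rw [Finset.sum_congr rfl sA] at h2
    simp at h2
    linarith
  · by_contra hcon
    push Not at hcon
    have c0 : c = 0 := by
      have := p1 0
      simp [hcon] at this
      exact this
    obtain ⟨u, hu, hzu⟩ := hz
    apply hzu
    rcases hmem u hu with h | h | h
    · rw [sA u h, c0, neg_zero]
    · obtain ⟨i, rfl⟩ := hasu u h; exact (hcon i).1
    · obtain ⟨i, rfl⟩ := hbsu u h; exact (hcon i).2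

theorem no_two_cliques_sharing_d_sub_three (d : ℕ) (hd : d ≥ 4)
    (X : Finset (EuclideanSpace ℝ (Fin d)))
    (hdiam : ∀ x ∈ X, ∀ y ∈ X, ‖x - y‖ ≤ 1) :
    ¬ ∃ K₁ K₂ : Finset (EuclideanSpace ℝ (Fin d)),
      K₁ ⊆ X ∧ K₂ ⊆ X ∧ K₁.card = d ∧ K₂.card = d ∧
      (∀ x ∈ K₁, ∀ y ∈ K₁, x ≠ y → ‖x - y‖ = 1) ∧
      (∀ x ∈ K₂, ∀ y ∈ K₂, x ≠ y → ‖x - y‖ = 1) ∧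
      (K₁ ∩ K₂).card = d - 3 := by
  rintro ⟨K₁, K₂, hX1, hX2, hc1, hc2, hK1, hK2, hI⟩
  have cB : (K₁ \ K₂).card = 3 := by
    have := Finset.card_sdiff_add_card_inter K₁ K₂; omega
  have cC : (K₂ \ K₁).card = 3 := by
    have := Finset.card_sdiff_add_card_inter K₂ K₁; rw [Finset.inter_comm] at this; omega
  have cU : (K₁ ∪ K₂).card = d + 3 := by
    have := Finset.card_union_add_card_inter K₁ K₂; omega
  obtain ⟨a, ainj, amem, asu, asum⟩ := enum3 _ cB
  obtain ⟨b, binj, bmem, bsu, bsum⟩ := enum3 _ cC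
  simp only [Finset.mem_sdiff] at amem bmem
  have hU : ∀ f : EuclideanSpace ℝ (Fin d) → ℝ, ∑ u ∈ K₁ ∪ K₂, f u =
      ∑ u ∈ K₁ ∩ K₂, f u + ∑ u ∈ K₁ \ K₂, f u + ∑ u ∈ K₂ \ K₁, f u := by
    intro f
    rw [Finset.sum_inter_add_sum_sdiff, ← Finset.union_sdiff_self_eq_union,
      Finset.sum_union Finset.disjoint_sdiff]
  have hmem : ∀ u ∈ K₁ ∪ K₂, u ∈ K₁ ∩ K₂ ∨ u ∈ K₁ \ K₂ ∨ u ∈ K₂ \ K₁ := by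
    intro u hu
    simp only [Finset.mem_union, Finset.mem_inter, Finset.mem_sdiff] at *
    tauto
  have sys := system (K₁ ∩ K₂) (K₁ \ K₂) (K₂ \ K₁) a b asum bsum asu bsu (K₁ ∪ K₂) hmem hU
    (fun u hu v hv h => hK1 u (Finset.mem_inter.1 hu).1 v (Finset.mem_inter.1 hv).1 h)
    (fun u hu i => hK1 u (Finset.mem_inter.1 hu).1 _ (amem i).1
      (fun h => (amem i).2 (h ▸ (Finset.mem_inter.1 hu).2)))
    (fun u hu i => hK2 u (Finset.mem_inter.1 hu).2 _ (bmem i).1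
      (fun h => (bmem i).2 (h ▸ (Finset.mem_inter.1 hu).1)))
    (fun i j h => hK1 _ (amem i).1 _ (amem j).1 (fun h' => h (ainj h')))
    (fun i j h => hK2 _ (bmem i).1 _ (bmem j).1 (fun h' => h (binj h')))
  obtain ⟨z, z1, z2, z3, z4⟩ := exists_rel (K₁ ∪ K₂) (by omega) (fun u => ‖u‖ ^ 2)
  obtain ⟨w, w1, w2, w3, w4⟩ := exists_rel (K₁ ∪ K₂) (by omega)
    (fun u => if u ∈ K₁ \ K₂ then 1 else 0)
  obtain ⟨s1, s2, s3, s4⟩ := sys z z1 z2 z4 0 z3.symm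
  obtain ⟨t1, t2, t3, t4⟩ := sys w w1 w2 w4 _ rfl
  refine abstract_contra (fun i j => 1 - ‖a i - b j‖ ^ 2) ?_ ?_ ((K₁ ∩ K₂).card : ℝ) ?_
    (fun i => z (a i)) (fun i => z (b i)) (fun i => w (a i)) (fun i => w (b i)) _
    (by simpa using s1) (by simpa using s2) (by simpa using s3) s4 t1 t2 t3 t4 ?_
  · intro i j
    have := hdiam _ (hX1 (amem i).1) _ (hX2 (bmem j).1)
    have := norm_nonneg (a i - b j)
    nlinarith
  · intro i j
    have : 0 < ‖a i - b j‖ := by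
      rw [norm_pos_iff, sub_ne_zero]
      intro h
      exact (amem i).2 (h ▸ (bmem j).1)
    nlinarith
  · rw [hI]; exact_mod_cast (by omega : 0 < d - 3)
  · rw [← asum w]
    simp only [mul_ite, mul_one, mul_zero] at w3
    rw [← Finset.sum_filter] at w3
    rw [← w3]
    refine Finset.sum_congr ?_ fun _ _ => rfl
    ext u
    simp only [Finset.mem_union, Finset.mem_filter, Finset.mem_sdiff]
    tauto
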